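/- Let R be a ring and let M and N be pure-quasi-injective right R-modules. If there is a pure monomorphism from M to N and a pure monomorphism from N to M, then M ≅ N. -/

import Mathlib

/-!
Corollary 2.8(2): Schröder–Bernstein for pure-quasi-injective modules.
"Right R-modules" are formalized as Lean `Module R` modules (the theory is
side-symmetric).
-/

universe u

variable (R : Type u) [Ring R]

/-- `f : A → B` is a pure monomorphism. We use the standard equational criterion
(solvability of finite linear systems descends from `B` to `A`), which for arbitrary
(possibly noncommutative) rings is equivalent to injectivity of `f ⊗ 1_C` for all
modules `C` on the other side. -/
def IsPureMono {A B : Type u} [AddCommGroup A] [Module R A] [AddCommGroup B] [Module R B]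
    (f : A →ₗ[R] B) : Prop :=
  Function.Injective f ∧
    ∀ (m n : ℕ) (r : Fin m → Fin n → R) (a : Fin m → A),
      (∃ y : Fin n → B, ∀ i, ∑ j, r i j • y j = f (a i)) →
      ∃ x : Fin n → A, ∀ i, ∑ j, r i j • x j = a i

/-- `E` is pure-injective: for every pure monomorphism `i : A → B`, every homomorphism
`A → E` extends to a homomorphism `B → E`. -/
def IsPureInjective (E : Type u) [AddCommGroup E] [Module R E] : Prop :=
  ∀ (A B : Type u) [AddCommGroup A] [Module R A] [AddCommGroup B] [Module R B]
    (i : A →ₗ[R] B), IsPureMono R i → ∀ f : A →ₗ[R] E, ∃ g : B →ₗ[R] E, g ∘ₗ i = f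

/-- `u : M → P` is a pure-injective envelope of `M`: `u` is a pure monomorphism into a
pure-injective module `P`, every homomorphism from `M` to a pure-injective module factors
through `u`, and every endomorphism `h` of `P` with `h ∘ u = u` is an automorphism. -/
def IsPureInjectiveEnvelope (M P : Type u) [AddCommGroup M] [Module R M]
    [AddCommGroup P] [Module R P] (u : M →ₗ[R] P) : Prop :=
  IsPureMono R u ∧ IsPureInjective R P ∧
    (∀ (Q : Type u) [AddCommGroup Q] [Module R Q], IsPureInjective R Q →
      ∀ f : M →ₗ[R] Q, ∃ g : P →ₗ[R] Q, g ∘ₗ u = f) ∧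
    (∀ h : P →ₗ[R] P, h ∘ₗ u = u → Function.Bijective h)

/-- `M` is pure-quasi-injective (invariant under endomorphisms of its pure-injective
envelope): for a pure-injective envelope `u : M → P` and every endomorphism `φ` of `P`,
there is an endomorphism `f` of `M` with `u ∘ f = φ ∘ u`. -/
def IsPureQuasiInjective (M : Type u) [AddCommGroup M] [Module R M] : Prop :=
  ∃ (P : Type u) (_ : AddCommGroup P) (_ : Module R P) (u : M →ₗ[R] P),
    IsPureInjectiveEnvelope R M P u ∧
    ∀ φ : P →ₗ[R] P, ∃ f : M →ₗ[R] M, u ∘ₗ f = φ ∘ₗ u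

/-!
Let `P` and `Q` be pure-injective envelopes of `M` and `N`. The two pure monomorphisms induce split
monomorphisms between `P` and `Q`, so `P ≃ D × Q` for some `D`, and there is a split monomorphism
`i : D × Q → Q`. Let `Y` be the least submodule of `Q` with `i (D × Y) = Y`. Since `Q` is
algebraically compact, some direct summand `E` of `Q` contains `Y` left minimally. Then `D × Y → E`
and `D × Y → D × E` are both left minimal and factor through each other, whence `E ≃ D × E`, and
adding a complement of `E` gives `Q ≃ D × Q ≃ P`. Finally, every homomorphism `P → Q` restricts to
`M → N`: composing it with a retraction `Q → P` gives an endomorphism of `Q`, which preserves `N`.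

The summand `E` is the image of an idempotent in the monoid `S` of endomorphisms of `Q` fixing `Y`
pointwise, taken so that its left ideal is minimal. Algebraic compactness makes the relevant
conditions on subsets of `S` of finite character, so such an idempotent comes from Zorn's lemma.
-/

section

/-- A homomorphism `v : X → E` is left minimal if every endomorphism `h` of `E` with `h ∘ v = v`
is an automorphism. It is the uniqueness clause of an envelope; `v` need not be injective. -/
def IsLeftMinimal {R X E : Type*} [Ring R] [AddCommGroup X] [Module R X] [AddCommGroup E]
    [Module R E] (v : X →ₗ[R] E) : Prop :=
  ∀ h : E →ₗ[R] E, h ∘ₗ v = v → Function.Bijective h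

namespace IsLeftMinimal

variable {R X X' E E' : Type*} [Ring R] [AddCommGroup X] [Module R X] [AddCommGroup X']
  [Module R X'] [AddCommGroup E] [Module R E] [AddCommGroup E'] [Module R E']

theorem comp_surjective {v : X →ₗ[R] E} (hv : IsLeftMinimal v) {σ : X' →ₗ[R] X}
    (hσ : Function.Surjective σ) : IsLeftMinimal (v ∘ₗ σ) :=
  fun h hh => hv h ((LinearMap.cancel_right hσ).1 hh)

theorem id_prodMap (D : Type*) [AddCommGroup D] [Module R D] {v : X →ₗ[R] E}
    (hv : IsLeftMinimal v) :
    IsLeftMinimal ((LinearMap.id : D →ₗ[R] D).prodMap v) := by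
  intro h hh
  have h_apply (d : D) (x : X) : h (d, v x) = (d, v x) := LinearMap.congr_fun hh (d, x)
  have h_left (d : D) : h (d, 0) = (d, 0) := by simpa using h_apply d 0
  set α : E →ₗ[R] D := LinearMap.fst R D E ∘ₗ h ∘ₗ LinearMap.inr R D E with hα
  set β : E →ₗ[R] E := LinearMap.snd R D E ∘ₗ h ∘ₗ LinearMap.inr R D E with hβ
  have h_triangular (d : D) (e : E) : h (d, e) = (d + α e, β e) := by
    rw [← zero_add e, ← add_zero d, ← Prod.mk_add_mk, map_add, h_left]
    ext <;> simp [hα, hβ]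
  have hβ_bij : Function.Bijective β :=
    hv β (LinearMap.ext fun x => by simp [hβ, h_apply])
  constructor
  · rintro ⟨d, e⟩ ⟨d', e'⟩ heq
    rw [h_triangular, h_triangular, Prod.mk.injEq] at heq
    obtain rfl := hβ_bij.1 heq.2
    rw [add_right_cancel heq.1]
  · rintro ⟨d, e⟩
    obtain ⟨e, rfl⟩ := hβ_bij.2 e
    exact ⟨(d - α e, e), by rw [h_triangular, sub_add_cancel]⟩

theorem nonempty_linearEquiv {v : X →ₗ[R] E} {w : X →ₗ[R] E'} (hv : IsLeftMinimal v)
    (hw : IsLeftMinimal w) (a : E →ₗ[R] E') (ha : a ∘ₗ v = w) (b : E' →ₗ[R] E)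
    (hb : b ∘ₗ w = v) : Nonempty (E ≃ₗ[R] E') := by
  have hba : Function.Bijective (b ∘ₗ a) := hv _ (by rw [LinearMap.comp_assoc, ha, hb])
  have hab : Function.Bijective (a ∘ₗ b) := hw _ (by rw [LinearMap.comp_assoc, hb, ha])
  exact ⟨LinearEquiv.ofBijective a ⟨.of_comp hba.1, .of_comp hab.2⟩⟩

end IsLeftMinimal

section Monoid

open Order

variable {S : Type*} [Monoid S]

-- If the `s a * a` all equal `z`, then the `t * s a * a` all equal `t * z`, so a maximal set with
-- a common left multiple `z` contains every `t * z`.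
theorem exists_forall_exists_mul_mul_eq_self
    (hS : IsOfFiniteCharacter {A : Set S | ∃ z, ∀ a ∈ A, ∃ s, s * a = z}) :
    ∃ m : S, ∀ t, ∃ s, s * (t * m) = m := by
  obtain ⟨A, -, ⟨z, hz⟩, hA⟩ := hS.exists_maximal (x := ∅) ⟨1, by simp⟩
  refine ⟨z, fun t => hz _ ?_⟩
  refine hA (y := insert (t * z) A) ⟨t * z, ?_⟩ (Set.subset_insert _ _) (Set.mem_insert _ _)
  rintro a (rfl | ha)
  · exact ⟨1, one_mul _⟩
  · obtain ⟨s, rfl⟩ := hz a ha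
    exact ⟨t * s, mul_assoc t s a⟩

-- A left identity of `y` is a left identity of everything that `y` fixes, so a maximal set with a
-- common left identity `y` in the left ideal `S * m` contains `y`.
theorem exists_isIdempotentElem_mul {m : S} (hm : ∀ t, ∃ s, s * (t * m) = m)
    (hS : IsOfFiniteCharacter {A : Set S | ∃ t, ∀ a ∈ A, t * m * a = a}) :
    ∃ t, IsIdempotentElem (t * m) := by
  obtain ⟨A, -, ⟨t, ht⟩, hA⟩ := hS.exists_maximal (x := ∅) ⟨1, by simp⟩
  obtain ⟨s, hs⟩ := hm (m * t)
  have hy : t * s * m * (t * m) = t * m := by simpa only [mul_assoc] using congr(t * $hs)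
  refine ⟨t, ht _ (hA (y := insert (t * m) A) ⟨t * s, ?_⟩ (Set.subset_insert _ _)
    (Set.mem_insert _ _))⟩
  rintro a (rfl | ha)
  · exact hy
  · calc t * s * m * a = t * s * m * (t * m) * a := by rw [mul_assoc _ (t * m), ht a ha]
      _ = a := by rw [hy, ht a ha]

theorem exists_isIdempotentElem_forall_exists_mul_mul_eq_self
    (hS : IsOfFiniteCharacter {A : Set S | ∃ z, ∀ a ∈ A, ∃ s, s * a = z})
    (hS' : ∀ m, IsOfFiniteCharacter {A : Set S | ∃ t, ∀ a ∈ A, t * m * a = a}) :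
    ∃ e : S, IsIdempotentElem e ∧ ∀ t, ∃ s, s * (t * e) = e := by
  obtain ⟨m, hm⟩ := exists_forall_exists_mul_mul_eq_self hS
  obtain ⟨u, hu⟩ := exists_isIdempotentElem_mul hm (hS' m)
  refine ⟨u * m, hu, fun t => ?_⟩
  obtain ⟨s, hs⟩ := hm (t * u)
  exact ⟨u * s, by simpa only [mul_assoc] using congr(u * $hs)⟩

end Monoid

variable {R : Type u} [Ring R]

theorem IsPureMono.comp {A B C : Type u} [AddCommGroup A] [Module R A] [AddCommGroup B]
    [Module R B] [AddCommGroup C] [Module R C] {g : B →ₗ[R] C} {f : A →ₗ[R] B}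
    (hg : IsPureMono R g) (hf : IsPureMono R f) : IsPureMono R (g ∘ₗ f) :=
  ⟨hg.1.comp hf.1, fun m n r a h => hf.2 m n r a (hg.2 m n r (f ∘ a) h)⟩

theorem isPureMono_mkQ_comp {A B : Type u} [AddCommGroup A] [Module R A] [AddCommGroup B]
    [Module R B] {f : A →ₗ[R] B} {K : Submodule R B}
    (h : ∀ F ≤ K, F.FG → ∃ ψ : B →ₗ[R] A, ψ ∘ₗ f = LinearMap.id ∧ F ≤ LinearMap.ker ψ) :
    IsPureMono R (K.mkQ ∘ₗ f) := by
  constructor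
  · rw [injective_iff_map_eq_zero]
    intro a ha
    have hfa : f a ∈ K := by simpa using ha
    obtain ⟨ψ, hψ, hker⟩ := h (Submodule.span R {f a}) (by simpa using hfa)
      (Submodule.fg_span_singleton _)
    calc a = ψ (f a) := (LinearMap.congr_fun hψ a).symm
      _ = 0 := hker (Submodule.mem_span_singleton_self _)
  · rintro m n r a ⟨y, hy⟩
    choose b hb using fun j => K.mkQ_surjective (y j)
    let defect (i : Fin m) : B := ∑ j, r i j • b j - f (a i)
    have h_defect (i : Fin m) : defect i ∈ K := by
      rw [← K.ker_mkQ, LinearMap.mem_ker]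
      simp only [defect, map_sub, map_sum, map_smul, hb, hy, LinearMap.comp_apply, sub_self]
    obtain ⟨ψ, hψ, hker⟩ := h (Submodule.span R (Set.range defect))
      (Submodule.span_le.2 (Set.range_subset_iff.2 h_defect))
      (Submodule.fg_span (Set.finite_range defect))
    refine ⟨fun j => ψ (b j), fun i => ?_⟩
    have hψ_defect : ψ (defect i) = 0 := hker (Submodule.subset_span ⟨i, rfl⟩)
    calc ∑ j, r i j • ψ (b j) = ψ (defect i) + ψ (f (a i)) := by
          simp only [defect, map_sub, map_sum, map_smul, sub_add_cancel]
      _ = a i := by rw [hψ_defect, zero_add]; exact LinearMap.congr_fun hψ (a i)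

namespace IsPureInjective

open Order

variable {Q : Type u} [AddCommGroup Q] [Module R Q]

theorem exists_retraction_le_ker (hQ : IsPureInjective R Q) {B : Type u} [AddCommGroup B]
    [Module R B] {f : Q →ₗ[R] B} {K : Submodule R B}
    (h : ∀ F ≤ K, F.FG → ∃ ψ : B →ₗ[R] Q, ψ ∘ₗ f = LinearMap.id ∧ F ≤ LinearMap.ker ψ) :
    ∃ ψ : B →ₗ[R] Q, ψ ∘ₗ f = LinearMap.id ∧ K ≤ LinearMap.ker ψ := by
  obtain ⟨g, hg⟩ := hQ _ _ _ (isPureMono_mkQ_comp h) LinearMap.id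
  refine ⟨g ∘ₗ K.mkQ, hg, fun x hx => ?_⟩
  rw [LinearMap.mem_ker, LinearMap.comp_apply, Submodule.mkQ_apply,
    (Submodule.Quotient.mk_eq_zero K).2 hx, map_zero]

-- A solution `φ` is the same thing as a retraction `(q, x) ↦ q + φ x` of `Q → Q × W` killing all
-- the elements `(- q i, w i)`.
theorem exists_forall_apply_eq (hQ : IsPureInjective R Q) {W : Type u} [AddCommGroup W]
    [Module R W] {ι : Type*} {w : ι → W} {q : ι → Q}
    (h : ∀ s : Finset ι, ∃ φ : W →ₗ[R] Q, ∀ i ∈ s, φ (w i) = q i) :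
    ∃ φ : W →ₗ[R] Q, ∀ i, φ (w i) = q i := by
  let K : Submodule R (Q × W) := ⨆ i, Submodule.span R {(-q i, w i)}
  obtain ⟨ψ, hψ, hker⟩ := hQ.exists_retraction_le_ker (f := LinearMap.inl R Q W) (K := K) (by
    intro F hF hFfg
    obtain ⟨s, hs⟩ := CompleteLattice.IsCompactElement.exists_finset_of_le_iSup _
      ((Submodule.fg_iff_compact F).1 hFfg) _ hF
    obtain ⟨φ, hφ⟩ := h s
    refine ⟨LinearMap.id.coprod φ, LinearMap.coprod_inl _ _, hs.trans (iSup₂_le fun i hi => ?_)⟩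
    rw [Submodule.span_singleton_le_iff_mem, LinearMap.mem_ker]
    simp [hφ i hi])
  refine ⟨ψ ∘ₗ LinearMap.inr R Q W, fun i => ?_⟩
  have h_rel : ψ (-q i, w i) = 0 :=
    hker (Submodule.mem_iSup_of_mem i (Submodule.mem_span_singleton_self _))
  have h_inl : ψ (q i, 0) = q i := LinearMap.congr_fun hψ (q i)
  calc ψ (0, w i) = ψ ((-q i, w i) + (q i, 0)) := by simp
    _ = q i := by rw [map_add, h_rel, h_inl, zero_add]

theorem exists_fixing_forall_lsum_eq (hQ : IsPureInjective R Q) (Y : Set Q) {κ : Type u}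
    {ι : Type*} {w : ι → κ →₀ Q} {q : ι → Q}
    (h : ∀ s : Finset ι, ∃ t : κ → fixingSubmonoid (Module.End R Q) Y,
      ∀ i ∈ s, Finsupp.lsum ℕ (fun k => (t k : Module.End R Q)) (w i) = q i) :
    ∃ t : κ → fixingSubmonoid (Module.End R Q) Y,
      ∀ i, Finsupp.lsum ℕ (fun k => (t k : Module.End R Q)) (w i) = q i := by
  obtain ⟨φ, hφ⟩ := hQ.exists_forall_apply_eq
    (w := Sum.elim (fun x : κ × Y => Finsupp.single x.1 (x.2 : Q)) w)
    (q := Sum.elim (fun x : κ × Y => (x.2 : Q)) q) (by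
      intro s
      obtain ⟨t, ht⟩ := h s.toRight
      refine ⟨Finsupp.lsum ℕ fun k => (t k : Module.End R Q), ?_⟩
      rintro (⟨k, y⟩ | i) hi
      · simpa using (t k).2 y
      · exact ht i (Finset.mem_toRight.2 hi))
  refine ⟨fun k => ⟨φ ∘ₗ Finsupp.lsingle k, fun y => hφ (Sum.inl (k, y))⟩, fun i => ?_⟩
  have hφ_lsum : Finsupp.lsum ℕ (fun k => φ ∘ₗ Finsupp.lsingle k) = φ := by
    ext; simp
  exact (LinearMap.congr_fun hφ_lsum (w i)).trans (hφ (Sum.inr i))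

theorem isOfFiniteCharacter_exists_mul_eq (hQ : IsPureInjective R Q) (Y : Set Q) :
    IsOfFiniteCharacter
      {A : Set (fixingSubmonoid (Module.End R Q) Y) | ∃ z, ∀ a ∈ A, ∃ s, s * a = z} := by
  classical
  refine fun A => ⟨fun ⟨z, hz⟩ B hB _ => ⟨z, fun a ha => hz a (hB ha)⟩, fun hA => ?_⟩
  -- The unknown indexed by `none` is the common multiple `z`.
  obtain ⟨t, ht⟩ := hQ.exists_fixing_forall_lsum_eq Y (κ := Option A) (ι := A × Q)
    (w := fun x => Finsupp.single (some x.1) ((x.1 : Module.End R Q) x.2) -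
      Finsupp.single none x.2) (q := 0) (by
      intro F
      obtain ⟨z, hz⟩ := hA (F.image fun x => (x.1 : fixingSubmonoid (Module.End R Q) Y))
        (by simp +contextual [Set.subset_def]) (Finset.finite_toSet _)
      have (a : A) : ∃ s, (∃ x, (a, x) ∈ F) → s * a = z := by
        by_cases ha : ∃ x, (a, x) ∈ F
        · obtain ⟨s, hs⟩ := hz a (by simpa using ha)
          exact ⟨s, fun _ => hs⟩
        · exact ⟨1, fun h => absurd h ha⟩
      choose s hs using this
      refine ⟨fun o => o.elim z s, ?_⟩
      rintro ⟨a, x⟩ hx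
      have hsx : (s a : Module.End R Q) ((a : Module.End R Q) x) = (z : Module.End R Q) x :=
        LinearMap.congr_fun (congrArg Subtype.val (hs a ⟨x, hx⟩)) x
      rw [map_sub, Finsupp.lsum_single, Finsupp.lsum_single]
      exact sub_eq_zero.2 hsx)
  refine ⟨t none, fun a ha => ⟨t (some ⟨a, ha⟩), Subtype.ext (LinearMap.ext fun x => ?_)⟩⟩
  have htx := ht (⟨a, ha⟩, x)
  rw [map_sub, Finsupp.lsum_single, Finsupp.lsum_single] at htx
  exact sub_eq_zero.1 htx

theorem isOfFiniteCharacter_mul_mul_eq_self (hQ : IsPureInjective R Q) (Y : Set Q)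
    (m : fixingSubmonoid (Module.End R Q) Y) :
    IsOfFiniteCharacter
      {A : Set (fixingSubmonoid (Module.End R Q) Y) | ∃ t, ∀ a ∈ A, t * m * a = a} := by
  classical
  refine fun A => ⟨fun ⟨t, ht⟩ B hB _ => ⟨t, fun a ha => ht a (hB ha)⟩, fun hA => ?_⟩
  obtain ⟨t, ht⟩ := hQ.exists_fixing_forall_lsum_eq Y (κ := PUnit) (ι := A × Q)
    (w := fun x => Finsupp.single .unit ((m * x.1 : Module.End R Q) x.2))
    (q := fun x => (x.1 : Module.End R Q) x.2) (by
      intro F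
      obtain ⟨t, ht⟩ := hA (F.image fun x => (x.1 : fixingSubmonoid (Module.End R Q) Y))
        (by simp +contextual [Set.subset_def]) (Finset.finite_toSet _)
      refine ⟨fun _ => t, ?_⟩
      rintro ⟨a, x⟩ hx
      have hta : t * m * a = a := ht a (Finset.mem_image_of_mem _ hx)
      simpa using LinearMap.congr_fun (congrArg Subtype.val hta) x)
  refine ⟨t .unit, fun a ha => Subtype.ext (LinearMap.ext fun x => ?_)⟩
  simpa using ht (⟨a, ha⟩, x)

end IsPureInjective

theorem isLeftMinimal_inclusion_range {Q : Type*} [AddCommGroup Q] [Module R Q]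
    {Y : Submodule R Q} {e : fixingSubmonoid (Module.End R Q) (Y : Set Q)}
    (he : IsIdempotentElem e) (hmin : ∀ t, ∃ s, s * (t * e) = e)
    (hY : Y ≤ LinearMap.range (e : Module.End R Q)) :
    IsLeftMinimal (Submodule.inclusion hY) := by
  set E := LinearMap.range (e : Module.End R Q)
  have he' : IsIdempotentElem (e : Module.End R Q) := congrArg Subtype.val he
  let π : Q →ₗ[R] E := (e : Module.End R Q).rangeRestrict
  have hπ (x : E) : π x = x := Subtype.ext ((LinearMap.IsIdempotentElem.mem_range_iff he').1 x.2)
  have exists_left_inverse (h : E →ₗ[R] E)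
      (hh : h ∘ₗ Submodule.inclusion hY = Submodule.inclusion hY) :
      ∃ g : E →ₗ[R] E, g ∘ₗ Submodule.inclusion hY = Submodule.inclusion hY ∧
        Function.LeftInverse g h := by
    let t : fixingSubmonoid (Module.End R Q) (Y : Set Q) :=
      ⟨E.subtype ∘ₗ h ∘ₗ π, fun y => by
        have hy : h (π y) = Submodule.inclusion hY y :=
          (congrArg h (hπ (Submodule.inclusion hY y))).trans (LinearMap.congr_fun hh y)
        exact congrArg E.subtype hy⟩
    obtain ⟨s, hs⟩ := hmin t
    refine ⟨π ∘ₗ (s : Module.End R Q) ∘ₗ E.subtype, LinearMap.ext fun y => ?_, fun x => ?_⟩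
    · exact (congrArg π (s.2 y)).trans (hπ (Submodule.inclusion hY y))
    · have hsx : (s : Module.End R Q) (h (π (π x))) = π x :=
        LinearMap.congr_fun (congrArg Subtype.val hs) x
      rw [hπ, hπ] at hsx
      exact (congrArg π hsx).trans (hπ x)
  intro h hh
  obtain ⟨g, hg, hgh⟩ := exists_left_inverse h hh
  obtain ⟨k, -, hkg⟩ := exists_left_inverse g hg
  exact ⟨hgh.injective, (hgh.rightInverse_of_injective hkg.injective).surjective⟩

namespace IsPureInjective

variable {Q : Type u} [AddCommGroup Q] [Module R Q]

theorem exists_isCompl_isLeftMinimal_inclusion (hQ : IsPureInjective R Q)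
    (Y : Submodule R Q) :
    ∃ E E' : Submodule R Q, IsCompl E E' ∧
      ∃ hY : Y ≤ E, IsLeftMinimal (Submodule.inclusion hY) := by
  obtain ⟨e, he, hmin⟩ := exists_isIdempotentElem_forall_exists_mul_mul_eq_self
    (hQ.isOfFiniteCharacter_exists_mul_eq Y) (hQ.isOfFiniteCharacter_mul_mul_eq_self Y)
  have he' : IsIdempotentElem (e : Module.End R Q) := congrArg Subtype.val he
  have hY : Y ≤ LinearMap.range (e : Module.End R Q) := fun y hy => ⟨y, e.2 ⟨y, hy⟩⟩
  exact ⟨_, _, LinearMap.IsIdempotentElem.isCompl he', hY, isLeftMinimal_inclusion_range he hmin hY⟩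

theorem nonempty_prod_linearEquiv (hQ : IsPureInjective R Q) {D : Type*} [AddCommGroup D]
    [Module R D] (i : D × Q →ₗ[R] Q) (k : Q →ₗ[R] D × Q) (hki : k ∘ₗ i = LinearMap.id) :
    Nonempty ((D × Q) ≃ₗ[R] Q) := by
  let T : Submodule R Q →o Submodule R Q :=
    ⟨fun Y => (Submodule.prod ⊤ Y).map i, fun _ _ h =>
      Submodule.map_mono (Submodule.prod_mono le_rfl h)⟩
  let Y := T.lfp
  have hT : (Submodule.prod ⊤ Y).map i = Y := T.map_lfp
  obtain ⟨E, E', hE, hY, hmin⟩ := hQ.exists_isCompl_isLeftMinimal_inclusion Y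
  let ι := Submodule.inclusion hY
  let π := E.projectionOnto E' hE
  have hi_mem (x : D × Y) : i (x.1, x.2) ∈ Y :=
    hT.le (Submodule.mem_map_of_mem ⟨trivial, x.2.2⟩)
  let σ : D × Y →ₗ[R] Y := (i ∘ₗ LinearMap.id.prodMap Y.subtype).codRestrict Y hi_mem
  have hσ : Function.Surjective σ := by
    rintro ⟨y, hy⟩
    obtain ⟨⟨d, x⟩, ⟨-, hx⟩, rfl⟩ := hT.ge hy
    exact ⟨(d, ⟨x, hx⟩), rfl⟩
  obtain ⟨θ⟩ := (hmin.id_prodMap D).nonempty_linearEquiv (hmin.comp_surjective hσ)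
    (π ∘ₗ i ∘ₗ LinearMap.id.prodMap E.subtype)
    (LinearMap.ext fun x => E.projectionOnto_apply_left hE (ι (σ x)))
    (LinearMap.id.prodMap π ∘ₗ k ∘ₗ E.subtype)
    (LinearMap.ext fun x => by
      have hkσ : k (σ x) = (x.1, (x.2 : Q)) := LinearMap.congr_fun hki (x.1, (x.2 : Q))
      have hπ : π x.2 = ι x.2 := E.projectionOnto_apply_left hE (ι x.2)
      exact (congrArg (LinearMap.id.prodMap π) hkσ).trans (Prod.ext rfl hπ))
  let Φ := E.prodEquivOfIsCompl E' hE
  exact ⟨(LinearEquiv.refl R D).prodCongr Φ.symm ≪≫ₗ (LinearEquiv.prodAssoc R D E E').symm ≪≫ₗ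
    θ.prodCongr (LinearEquiv.refl R E') ≪≫ₗ Φ⟩

theorem nonempty_linearEquiv (hQ : IsPureInjective R Q) {P : Type*} [AddCommGroup P]
    [Module R P] (F : P →ₗ[R] Q) (K : Q →ₗ[R] P) (hKF : K ∘ₗ F = LinearMap.id)
    (G : Q →ₗ[R] P) (L : P →ₗ[R] Q) (hLG : L ∘ₗ G = LinearMap.id) :
    Nonempty (P ≃ₗ[R] Q) := by
  let ε : (LinearMap.ker L × Q) ≃ₗ[R] P :=
    lequivProdOfRightSplitExact (Submodule.subtype_injective _) (Submodule.range_subtype _) hLG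
  obtain ⟨θ⟩ := hQ.nonempty_prod_linearEquiv (F ∘ₗ ε.toLinearMap) (ε.symm.toLinearMap ∘ₗ K)
    (LinearMap.ext fun x => by
      simpa using congrArg ε.symm (LinearMap.congr_fun hKF (ε x)))
  exact ⟨ε.symm ≪≫ₗ θ⟩

end IsPureInjective

theorem IsPureInjectiveEnvelope.exists_split_mono {M P Q : Type u} [AddCommGroup M]
    [Module R M] [AddCommGroup P] [Module R P] [AddCommGroup Q] [Module R Q] {u : M →ₗ[R] P}
    (hu : IsPureInjectiveEnvelope R M P u) (hQ : IsPureInjective R Q) {w : M →ₗ[R] Q}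
    (hw : IsPureMono R w) :
    ∃ (F : P →ₗ[R] Q) (K : Q →ₗ[R] P), K ∘ₗ F = LinearMap.id ∧ F ∘ₗ u = w := by
  obtain ⟨-, hP, h_extend, h_minimal⟩ := hu
  obtain ⟨F, hF⟩ := h_extend Q hQ w
  obtain ⟨k, hk⟩ := hP M Q w hw u
  have hkF : Function.Bijective (k ∘ₗ F) := h_minimal _ (by rw [LinearMap.comp_assoc, hF, hk])
  let α := LinearEquiv.ofBijective (k ∘ₗ F) hkF
  exact ⟨F, α.symm.toLinearMap ∘ₗ k, LinearMap.ext α.symm_apply_apply, hF⟩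

theorem exists_restrict_of_forall_exists_restrict {M N P Q : Type*} [AddCommGroup M] [Module R M]
    [AddCommGroup N] [Module R N] [AddCommGroup P] [Module R P] [AddCommGroup Q] [Module R Q]
    {u : M →ₗ[R] P} {v : N →ₗ[R] Q}
    (hN : ∀ φ : Q →ₗ[R] Q, ∃ n : N →ₗ[R] N, v ∘ₗ n = φ ∘ₗ v)
    {f : M →ₗ[R] N} {F : P →ₗ[R] Q} {K : Q →ₗ[R] P} (hKF : K ∘ₗ F = LinearMap.id)
    (hF : F ∘ₗ u = v ∘ₗ f) (a : P →ₗ[R] Q) : ∃ a' : M →ₗ[R] N, v ∘ₗ a' = a ∘ₗ u := by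
  obtain ⟨n, hn⟩ := hN (a ∘ₗ K)
  refine ⟨n ∘ₗ f, ?_⟩
  calc v ∘ₗ n ∘ₗ f = a ∘ₗ K ∘ₗ v ∘ₗ f := congr($hn ∘ₗ f)
    _ = a ∘ₗ (K ∘ₗ F) ∘ₗ u := by rw [← hF, LinearMap.comp_assoc]
    _ = a ∘ₗ u := by rw [hKF, LinearMap.id_comp]

theorem nonempty_linearEquiv_of_restrict {M N P Q : Type*} [AddCommGroup M] [Module R M]
    [AddCommGroup N] [Module R N] [AddCommGroup P] [Module R P] [AddCommGroup Q] [Module R Q]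
    {u : M →ₗ[R] P} {v : N →ₗ[R] Q} (hu : Function.Injective u) (hv : Function.Injective v)
    (θ : P ≃ₗ[R] Q) {a : M →ₗ[R] N} (ha : v ∘ₗ a = θ.toLinearMap ∘ₗ u)
    {b : N →ₗ[R] M} (hb : u ∘ₗ b = θ.symm.toLinearMap ∘ₗ v) : Nonempty (M ≃ₗ[R] N) := by
  have ha' (x : M) : v (a x) = θ (u x) := LinearMap.congr_fun ha x
  have hb' (y : N) : u (b y) = θ.symm (v y) := LinearMap.congr_fun hb y
  exact ⟨LinearEquiv.ofLinearMap a b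
    (LinearMap.ext fun y => hv (by simp [ha', hb']))
    (LinearMap.ext fun x => hu (by simp [ha', hb']))⟩

end

/-- If `M` and `N` are pure-quasi-injective and there are pure monomorphisms `M → N` and
`N → M`, then `M ≅ N`. -/
theorem stmt11 (M N : Type u) [AddCommGroup M] [Module R M] [AddCommGroup N] [Module R N]
    (hM : IsPureQuasiInjective R M) (hN : IsPureQuasiInjective R N)
    (f : M →ₗ[R] N) (hf : IsPureMono R f)
    (g : N →ₗ[R] M) (hg : IsPureMono R g) :
    Nonempty (M ≃ₗ[R] N) := by
  obtain ⟨P, _, _, u, hu, hMu⟩ := hM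
  obtain ⟨Q, _, _, v, hv, hNv⟩ := hN
  obtain ⟨F, K, hKF, hF⟩ := hu.exists_split_mono hv.2.1 (hv.1.comp hf)
  obtain ⟨G, L, hLG, hG⟩ := hv.exists_split_mono hu.2.1 (hu.1.comp hg)
  obtain ⟨θ⟩ := hv.2.1.nonempty_linearEquiv F K hKF G L hLG
  obtain ⟨a, ha⟩ := exists_restrict_of_forall_exists_restrict hNv hKF hF θ.toLinearMap
  obtain ⟨b, hb⟩ := exists_restrict_of_forall_exists_restrict hMu hLG hG θ.symm.toLinearMap
  exact nonempty_linearEquiv_of_restrict hu.1.1 hv.1.1 θ ha hb
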